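/- arXiv:2006.04032 — 3 statements merged into one kernel-verified Lean document; each statement's English description precedes it below -/
import Mathlib

section
/- There is no injective group homomorphism from ℤ × ℤ into the free product ℤ ∗ (ℤ/2ℤ). -/
/-!
The kernel of the projection `G ∗ H → H` is the free product of the conjugates `h G h⁻¹`, because
`G ∗ H` and the semidirect product of `H` acting on copies of `G` indexed by `H` have the same
universal property. So if `G` is free and `H` is torsion, any two commuting elements of `G ∗ H` have
positive powers in a free group. There, by Nielsen–Schreier, the subgroup that these powers generate
is free and commutative, hence cyclic, so the two elements satisfy a nontrivial relation
`x ^ m = y ^ n`; the standard generators of `ℤ × ℤ` satisfy none.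
-/

section

open Monoid Monoid.Coprod

section FreeProductKernel

section Reindexing

variable (G : Type*) [Monoid G]

/-- The homomorphism between free products of copies of `G` which sends the `i`-th copy
identically onto the `f i`-th one. -/
def coprodIReindexHom {ι κ : Type*} (f : ι → κ) :
    CoprodI (fun _ : ι => G) →* CoprodI (fun _ : κ => G) :=
  CoprodI.lift fun i => CoprodI.of (M := fun _ : κ => G) (i := f i)

@[simp]
theorem coprodIReindexHom_of {ι κ : Type*} (f : ι → κ) (i : ι) (g : G) :
    coprodIReindexHom G f (CoprodI.of (i := i) g) =
      CoprodI.of (M := fun _ : κ => G) (i := f i) g :=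
  CoprodI.lift_of _ _

/-- The action of `H` on the free product of copies of `G` indexed by `H`, by left translation of
the index. -/
def coprodITranslation (H : Type*) [Group H] : H →* MulAut (CoprodI fun _ : H => G) where
  toFun h := (coprodIReindexHom G (h * ·)).toMulEquiv (coprodIReindexHom G (h⁻¹ * ·))
    (by ext; simp) (by ext; simp)
  map_one' := MulEquiv.toMonoidHom_injective (by ext; simp)
  map_mul' h k := MulEquiv.toMonoidHom_injective (by ext; simp [mul_assoc])

@[simp]
theorem coprodITranslation_of {H : Type*} [Group H] (h k : H) (g : G) :
    coprodITranslation G H h (CoprodI.of (i := k) g) =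
      CoprodI.of (M := fun _ : H => G) (i := h * k) g :=
  coprodIReindexHom_of G (h * ·) k g

end Reindexing

variable (G H : Type*) [Group G] [Group H]

/-- The homomorphism from the free product of copies of `G` indexed by `H` to `G ∗ H` which maps
the copy with index `h` onto the conjugate `h G h⁻¹`. -/
def coprodConjugatesHom : CoprodI (fun _ : H => G) →* Coprod G H :=
  CoprodI.lift fun h => (MulAut.conj (inr h)).toMonoidHom.comp inl

@[simp]
theorem coprodConjugatesHom_of (h : H) (g : G) :
    coprodConjugatesHom G H (CoprodI.of (i := h) g) = inr h * inl g * (inr h)⁻¹ := by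
  simp [coprodConjugatesHom]

/-- The decomposition of `G ∗ H` as a semidirect product of the free product of the conjugates
`h G h⁻¹` by `H`. The factor `G` of `G ∗ H` corresponds to the copy with index `1`. -/
def coprodEquivSemidirectProduct :
    Coprod G H ≃* CoprodI (fun _ : H => G) ⋊[coprodITranslation G H] H :=
  (Coprod.lift (SemidirectProduct.inl.comp (CoprodI.of (M := fun _ : H => G) (i := 1)))
    SemidirectProduct.inr).toMulEquiv
    (SemidirectProduct.lift (coprodConjugatesHom G H) inr fun h => by ext; simp [mul_assoc])
    (by ext <;> simp)
    (SemidirectProduct.hom_ext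
      (CoprodI.ext_hom _ _ fun h => by
        ext1 g
        simpa using (SemidirectProduct.inl_aut (φ := coprodITranslation G H) h
          (CoprodI.of (i := 1) g)).symm)
      (by ext1 h; simp))

theorem rightHom_comp_coprodEquivSemidirectProduct :
    SemidirectProduct.rightHom.comp (coprodEquivSemidirectProduct G H).toMonoidHom = snd := by
  ext <;> simp [coprodEquivSemidirectProduct]

theorem coprodEquivSemidirectProduct_symm_comp_inl :
    (coprodEquivSemidirectProduct G H).symm.toMonoidHom.comp SemidirectProduct.inl =
      coprodConjugatesHom G H :=
  MonoidHom.ext fun w => by simp [coprodEquivSemidirectProduct]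

theorem coprodConjugatesHom_injective : Function.Injective (coprodConjugatesHom G H) := by
  rw [← coprodEquivSemidirectProduct_symm_comp_inl]
  exact (coprodEquivSemidirectProduct G H).symm.injective.comp SemidirectProduct.inl_injective

theorem range_coprodConjugatesHom :
    (coprodConjugatesHom G H).range = (snd : Coprod G H →* H).ker := by
  rw [← rightHom_comp_coprodEquivSemidirectProduct, ← MonoidHom.comap_ker,
    ← SemidirectProduct.range_inl_eq_ker_rightHom, ← coprodEquivSemidirectProduct_symm_comp_inl,
    MonoidHom.range_comp, Subgroup.comap_equiv_eq_map_symm']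

instance isFreeGroup_ker_coprod_snd [IsFreeGroup G] :
    IsFreeGroup (snd : Coprod G H →* H).ker :=
  .ofMulEquiv ((MonoidHom.ofInjective (coprodConjugatesHom_injective G H)).trans
    (MulEquiv.subgroupCongr (range_coprodConjugatesHom G H)))

end FreeProductKernel

section CommutingElements

theorem eq_of_commute_freeGroup_of {α : Type*} {a b : α}
    (h : Commute (FreeGroup.of a) (FreeGroup.of b)) : a = b := by
  classical
  have hwords : a = b ∧ b = a := by
    simpa [FreeGroup.toWord_mul] using congrArg FreeGroup.toWord h.eq
  exact hwords.1

theorem isCyclic_of_isFreeGroup_of_isMulCommutative (G : Type*) [Group G] [IsFreeGroup G]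
    [IsMulCommutative G] : IsCyclic G := by
  obtain ⟨ι, ⟨b⟩⟩ := IsFreeGroup.nonempty_basis (G := G)
  have : Subsingleton ι := ⟨fun i j => eq_of_commute_freeGroup_of <| by
    simpa using Commute.map (mul_comm' (b i) (b j)) b.repr⟩
  rw [b.repr.isCyclic]
  rcases isEmpty_or_nonempty ι with _ | ⟨⟨i⟩⟩
  · infer_instance
  · have := uniqueOfSubsingleton i
    infer_instance

theorem exists_mem_zpowers_of_commute_of_isFreeGroup {G : Type*} [Group G] [IsFreeGroup G]
    {x y : G} (h : Commute x y) :
    ∃ g : G, x ∈ Subgroup.zpowers g ∧ y ∈ Subgroup.zpowers g := by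
  have hcomm : ∀ u ∈ ({x, y} : Set G), ∀ v ∈ ({x, y} : Set G), u * v = v * u := by
    rintro u (rfl | rfl) v (rfl | rfl)
    exacts [rfl, h, h.symm, rfl]
  have := Subgroup.isMulCommutative_closure hcomm
  have hcyclic := isCyclic_of_isFreeGroup_of_isMulCommutative (Subgroup.closure {x, y})
  obtain ⟨g, hg⟩ := (Subgroup.isCyclic_iff_exists_zpowers_eq_top _).mp hcyclic
  exact ⟨g, hg ▸ Subgroup.subset_closure (.inl rfl), hg ▸ Subgroup.subset_closure (.inr rfl)⟩

theorem exists_zpow_eq_zpow_of_commute_of_isFreeGroup_ker {E Q : Type*} [Group E] [Group Q]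
    (π : E →* Q) [IsFreeGroup π.ker] {x y : E} (hx : IsOfFinOrder (π x))
    (hy : IsOfFinOrder (π y)) (h : Commute x y) :
    ∃ m n : ℤ, (m ≠ 0 ∨ n ≠ 0) ∧ x ^ m = y ^ n := by
  obtain ⟨p, hp, hxp⟩ := hx.exists_pow_eq_one
  obtain ⟨q, hq, hyq⟩ := hy.exists_pow_eq_one
  let u : π.ker := ⟨x ^ p, by rwa [MonoidHom.mem_ker, map_pow]⟩
  let v : π.ker := ⟨y ^ q, by rwa [MonoidHom.mem_ker, map_pow]⟩
  have huv : Commute u v := Subtype.ext (h.pow_pow p q)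
  obtain ⟨g, ⟨i, hi⟩, ⟨j, hj⟩⟩ := exists_mem_zpowers_of_commute_of_isFreeGroup huv
  have hgx : (g : E) ^ i = x ^ p := congrArg Subtype.val hi
  have hgy : (g : E) ^ j = y ^ q := congrArg Subtype.val hj
  by_cases hj0 : j = 0
  · exact ⟨0, q, .inr (by positivity), by simp [← hgy, hj0]⟩
  · refine ⟨p * j, q * i, .inl (by positivity), ?_⟩
    calc
      x ^ (p * j : ℤ) = ((g : E) ^ i) ^ j := by rw [zpow_mul, zpow_natCast, hgx]
      _ = ((g : E) ^ j) ^ i := zpow_comm ..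
      _ = y ^ (q * i : ℤ) := by rw [zpow_mul, zpow_natCast, hgy]

end CommutingElements

instance isFreeGroup_multiplicative_int : IsFreeGroup (Multiplicative ℤ) :=
  .ofMulEquiv (FreeGroup.mulEquivIntOfUnique (α := Unit))

theorem no_injective_hom_int_prod_int_into_freeProduct_int_zmod_two_general {G H : Type*}
    [Group G] [IsFreeGroup G] [Group H] (hH : IsMulTorsion H) :
    ¬ ∃ f : (Multiplicative ℤ × Multiplicative ℤ) →* Coprod G H, Function.Injective f := by
  rintro ⟨f, hf⟩
  let a : Multiplicative ℤ × Multiplicative ℤ := (.ofAdd 1, 1)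
  let b : Multiplicative ℤ × Multiplicative ℤ := (1, .ofAdd 1)
  obtain ⟨m, n, hmn, hpow⟩ := exists_zpow_eq_zpow_of_commute_of_isFreeGroup_ker snd
    (hH (snd (f a))) (hH (snd (f b))) ((Commute.all a b).map f)
  have hab : a ^ m = b ^ n := hf (by simpa only [map_zpow] using hpow)
  have hm : m = 0 := by simpa [a, b] using congrArg (·.1.toAdd) hab
  have hn : n = 0 := by simpa [a, b] using congrArg (·.2.toAdd) hab.symm
  exact hmn.elim (· hm) (· hn)

end

/-- There is no injective group homomorphism from `ℤ × ℤ` into the free product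
`ℤ ∗ (ℤ/2ℤ)` (Lemma 2 of the paper). Here groups are written multiplicatively:
`ℤ` is `Multiplicative ℤ`, `ℤ/2ℤ` is `Multiplicative (ZMod 2)`, and the free
product is `Monoid.Coprod`. -/
theorem no_injective_hom_int_prod_int_into_freeProduct_int_zmod_two :
    ¬ ∃ f : (Multiplicative ℤ × Multiplicative ℤ) →*
        Monoid.Coprod (Multiplicative ℤ) (Multiplicative (ZMod 2)),
      Function.Injective f :=
  no_injective_hom_int_prod_int_into_freeProduct_int_zmod_two_general isMulTorsion_of_finite
end

section
/- Let ℓ ⊂ ℝP³ be a projective line, namely the image under Projectivization.mk of the nonzero vectors of a 2-dimensional linear subspace W of EuclideanSpace ℝ (Fin 4). Then for any basepoint x₀ in ℝP³ \ ℓ, the fundamental group π₁(ℝP³ \ ℓ, x₀) is isomorphic to the infinite cyclic group ℤ. -/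
/-- The quotient topology on the projectivization, induced from the nonzero vectors. -/
instance projectivizationTopology {K V : Type*} [DivisionRing K] [AddCommGroup V]
    [Module K V] [TopologicalSpace V] : TopologicalSpace (Projectivization K V) :=
  instTopologicalSpaceQuotient

/-!
A closed `W` of codimension 2 is `{z = 0}` in coordinates `V ≃ ℂ × E`, so a point off `ℙ W` is
some `[z : w]` with `z ≠ 0`. Rescaling by a positive real makes `|z| = 1`, and what remains is
`[exp (i t) : w]`, where `(t, w)` and `(t', w')` give the same point exactly when
`t' = t + n π` and `w' = (-1) ^ n w` for some integer `n`. Hence the complement of `ℙ W` is the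
quotient of the contractible space `ℝ × E` by a free, properly discontinuous action of `ℤ`.
-/

open Topology
open scoped LinearAlgebra.Projectivization

theorem isOpenMap_projectivization_mk' {K V : Type*} [DivisionRing K] [AddCommGroup V]
    [Module K V] [TopologicalSpace V] [ContinuousConstSMul K V] :
    IsOpenMap (Projectivization.mk' K : {v : V // v ≠ 0} → ℙ K V) := by
  intro U hU
  let scale (a : Kˣ) (v : {v : V // v ≠ 0}) : {v : V // v ≠ 0} :=
    ⟨a • (v : V), (smul_ne_zero_iff_ne a).mpr v.2⟩
  have preimage_image : Projectivization.mk' K ⁻¹' (Projectivization.mk' K '' U) =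
      ⋃ a : Kˣ, scale a ⁻¹' U := by
    ext v
    simp only [Set.mem_preimage, Set.mem_image, Set.mem_iUnion, Projectivization.mk'_eq_mk,
      Projectivization.mk_eq_mk_iff]
    exact ⟨fun ⟨u, hu, a, ha⟩ => ⟨a, (Subtype.ext ha : scale a v = u) ▸ hu⟩,
      fun ⟨a, ha⟩ => ⟨scale a v, ha, a, rfl⟩⟩
  have isQuotientMap_mk' : IsQuotientMap (Projectivization.mk' K : {v : V // v ≠ 0} → ℙ K V) :=
    isQuotientMap_quotient_mk'
  rw [← isQuotientMap_mk'.isOpen_preimage, preimage_image]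
  have continuous_scale (a : Kˣ) : Continuous (scale a) := by fun_prop
  exact isOpen_iUnion fun a => hU.preimage (continuous_scale a)

theorem ofReal_eq_exp_mul_I_iff {a t : ℝ} :
    (a : ℂ) = Complex.exp (t * Complex.I) ↔ ∃ n : ℤ, n * Real.pi = t ∧ (-1) ^ n = a := by
  have : (a : ℂ) = Complex.exp (t * Complex.I) ↔ a = Real.cos t ∧ Real.sin t = 0 := by
    rw [Complex.ext_iff, Complex.exp_ofReal_mul_I_re, Complex.exp_ofReal_mul_I_im,
      Complex.ofReal_re, Complex.ofReal_im, eq_comm (a := (0 : ℝ))]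
  rw [this, Real.sin_eq_zero_iff]
  constructor
  · rintro ⟨rfl, n, rfl⟩
    exact ⟨n, rfl, (Real.cos_int_mul_pi n).symm⟩
  · rintro ⟨n, rfl, rfl⟩
    exact ⟨(Real.cos_int_mul_pi n).symm, n, rfl⟩

section Glide

variable {E : Type*} [AddCommGroup E] [Module ℝ E]

/-- The action of `ℤ` on `ℝ × E` generated by the glide reflection `(t, w) ↦ (t + π, -w)`. -/
noncomputable abbrev glideAction : AddAction ℤ (ℝ × E) where
  vadd n x := (n * Real.pi + x.1, (-1 : ℝ) ^ n • x.2)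
  zero_vadd x := by
    change ((0 : ℤ) * Real.pi + x.1, (-1 : ℝ) ^ (0 : ℤ) • x.2) = x
    simp
  add_vadd m n x := by
    change ((m + n : ℤ) * Real.pi + x.1, (-1 : ℝ) ^ (m + n) • x.2) =
      (m * Real.pi + (n * Real.pi + x.1), (-1 : ℝ) ^ m • (-1 : ℝ) ^ n • x.2)
    rw [zpow_add₀ (by norm_num), mul_smul, Int.cast_add, add_mul, add_assoc]

attribute [local instance] glideAction

theorem glide_vadd_def (n : ℤ) (x : ℝ × E) :
    n +ᵥ x = (n * Real.pi + x.1, (-1 : ℝ) ^ n • x.2) :=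
  rfl

theorem exists_nhds_glide_disjoint [TopologicalSpace E] (x : ℝ × E) :
    ∃ U ∈ 𝓝 x, ∀ n : ℤ, ((n +ᵥ ·) '' U ∩ U).Nonempty → n = 0 := by
  refine ⟨Prod.fst ⁻¹' Metric.ball x.1 (Real.pi / 2),
    continuous_fst.continuousAt.preimage_mem_nhds (Metric.ball_mem_nhds _ Real.pi_div_two_pos), ?_⟩
  rintro n ⟨_, ⟨y, hy, rfl⟩, hny⟩
  have dist_lt : |(n : ℝ) * Real.pi| < Real.pi := by
    calc |(n : ℝ) * Real.pi| = dist (n +ᵥ y).1 y.1 := by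
          rw [glide_vadd_def, Real.dist_eq, add_sub_cancel_right]
      _ ≤ dist (n +ᵥ y).1 x.1 + dist y.1 x.1 := dist_triangle_right _ _ _
      _ < Real.pi / 2 + Real.pi / 2 := add_lt_add hny hy
      _ = Real.pi := add_halves _
  rw [abs_mul, abs_of_pos Real.pi_pos, mul_lt_iff_lt_one_left Real.pi_pos] at dist_lt
  exact Int.abs_lt_one_iff.mp (by exact_mod_cast dist_lt)

end Glide

section Complement

variable {V E : Type*} [AddCommGroup V] [Module ℝ V] [TopologicalSpace V]
  [AddCommGroup E] [Module ℝ E] [TopologicalSpace E] (Φ : V ≃L[ℝ] ℂ × E)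

/-- The subspace `z = 0` of `V` in the coordinates `Φ v = (z, w)`. -/
noncomputable def axis : Submodule ℝ V :=
  (LinearMap.fst ℝ ℂ E ∘ₗ (Φ : V →ₗ[ℝ] ℂ × E)).ker

variable {Φ} in
theorem mem_axis_iff {v : V} : v ∈ axis Φ ↔ (Φ v).1 = 0 :=
  Iff.rfl

/-- The complement of the projectivization of `axis Φ` in the projective space of `V`. -/
abbrev AxisCompl : Type _ :=
  {p : ℙ ℝ V // p ∉ (axis Φ).projectivization}

/-- The vector with coordinates `(exp z, w)`; every vector off `axis Φ` is of this form. -/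
noncomputable def expVector (x : ℂ × E) : {v : V // v ≠ 0} :=
  ⟨Φ.symm (Complex.exp x.1, x.2), fun h => Complex.exp_ne_zero x.1 <| by
    rw [Φ.symm.map_eq_zero_iff] at h
    exact congrArg Prod.fst h⟩

theorem coe_expVector (x : ℂ × E) : (expVector Φ x : V) = Φ.symm (Complex.exp x.1, x.2) :=
  rfl

theorem expVector_notMem_axis (x : ℂ × E) : (expVector Φ x : V) ∉ axis Φ := by
  rw [mem_axis_iff, coe_expVector, Φ.apply_symm_apply]
  exact Complex.exp_ne_zero x.1

/-- The point `[exp z : w]` of `AxisCompl Φ`, for `(z, w)` in `ℂ × E`. -/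
noncomputable def expPoint (x : ℂ × E) : AxisCompl Φ :=
  ⟨.mk' ℝ (expVector Φ x), expVector_notMem_axis Φ x⟩

variable {Φ} in
theorem expPoint_eq_iff {x y : ℂ × E} :
    expPoint Φ x = expPoint Φ y ↔
      ∃ a : ℝ, (a : ℂ) = Complex.exp (x.1 - y.1) ∧ a • y.2 = x.2 := by
  rw [Subtype.ext_iff]
  refine (Projectivization.mk_eq_mk_iff' ℝ _ _ _ _).trans (exists_congr fun a => ?_)
  rw [← map_smul, Φ.symm.injective.eq_iff, Prod.ext_iff]
  refine and_congr_left' ?_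
  rw [Prod.smul_fst, Complex.real_smul, Complex.exp_sub, eq_div_iff (Complex.exp_ne_zero _)]

theorem continuous_expPoint : Continuous (expPoint Φ) := by
  have continuous_expVector : Continuous (expVector Φ) :=
    (Φ.symm.continuous.comp (by fun_prop)).subtype_mk _
  exact (continuous_quot_mk.comp continuous_expVector).subtype_mk _

theorem isOpenMap_expPoint [ContinuousConstSMul ℝ V] : IsOpenMap (expPoint Φ) := by
  have isOpenMap_expVector : IsOpenMap (expVector Φ) :=
    (Φ.symm.toHomeomorph.isOpenMap.comp
      (Complex.isOpenMap_exp.prodMap IsOpenMap.id)).codRestrict _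
  exact (isOpenMap_projectivization_mk'.comp isOpenMap_expVector).codRestrict _

theorem expPoint_surjective : Function.Surjective (expPoint Φ) := by
  rintro ⟨p, hp⟩
  induction p with | h v hv =>
  rw [Submodule.mk_mem_projectivization_iff, mem_axis_iff] at hp
  have expVector_log : expVector Φ (Complex.log (Φ v).1, (Φ v).2) = ⟨v, hv⟩ := by
    rw [Subtype.ext_iff, coe_expVector, Complex.exp_log hp, Φ.symm_apply_apply]
  exact ⟨_, Subtype.ext (congrArg (Projectivization.mk' ℝ) expVector_log)⟩

/-- The point `[exp (i t) : w]` of `AxisCompl Φ`, for `(t, w)` in `ℝ × E`. -/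
noncomputable def circlePoint (x : ℝ × E) : AxisCompl Φ :=
  expPoint Φ (x.1 * Complex.I, x.2)

theorem expPoint_eq_circlePoint (x : ℂ × E) :
    expPoint Φ x = circlePoint Φ (x.1.im, Real.exp (-x.1.re) • x.2) := by
  refine expPoint_eq_iff.mpr ⟨Real.exp x.1.re, ?_, ?_⟩
  · rw [Complex.ofReal_exp, sub_eq_of_eq_add (Complex.re_add_im x.1).symm]
  · rw [smul_smul, ← Real.exp_add, add_neg_cancel, Real.exp_zero, one_smul]

theorem continuous_circlePoint : Continuous (circlePoint Φ) :=
  (continuous_expPoint Φ).comp (by fun_prop)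

theorem isQuotientMap_circlePoint [ContinuousConstSMul ℝ V] [ContinuousSMul ℝ E] :
    IsQuotientMap (circlePoint Φ) := by
  have isQuotientMap_expPoint : IsQuotientMap (expPoint Φ) :=
    (isOpenMap_expPoint Φ).isQuotientMap (continuous_expPoint Φ) (expPoint_surjective Φ)
  let normalize (x : ℂ × E) : ℝ × E := (x.1.im, Real.exp (-x.1.re) • x.2)
  have expPoint_eq_comp : expPoint Φ = circlePoint Φ ∘ normalize :=
    funext (expPoint_eq_circlePoint Φ)
  have continuous_normalize : Continuous normalize := by fun_prop
  exact .of_comp continuous_normalize (continuous_circlePoint Φ)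
    (expPoint_eq_comp ▸ isQuotientMap_expPoint)

attribute [local instance] glideAction

variable {Φ} in
theorem circlePoint_eq_iff {x y : ℝ × E} :
    circlePoint Φ x = circlePoint Φ y ↔ x ∈ AddAction.orbit ℤ y := by
  calc circlePoint Φ x = circlePoint Φ y
      ↔ ∃ a : ℝ, (a : ℂ) = Complex.exp ((x.1 - y.1 : ℝ) * Complex.I) ∧ a • y.2 = x.2 := by
        rw [Complex.ofReal_sub, sub_mul]
        exact expPoint_eq_iff
    _ ↔ ∃ n : ℤ, n * Real.pi = x.1 - y.1 ∧ (-1 : ℝ) ^ n • y.2 = x.2 := by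
        simp only [ofReal_eq_exp_mul_I_iff]
        grind
    _ ↔ x ∈ AddAction.orbit ℤ y := by
        simp only [AddAction.mem_orbit_iff, glide_vadd_def, Prod.ext_iff, eq_sub_iff_add_eq]

theorem isAddQuotientCoveringMap_circlePoint [ContinuousConstSMul ℝ V] [ContinuousSMul ℝ E] :
    IsAddQuotientCoveringMap (circlePoint Φ) ℤ where
  toIsQuotientMap := isQuotientMap_circlePoint Φ
  continuous_const_vadd n := by
    simp only [glide_vadd_def]
    fun_prop
  apply_eq_iff_mem_orbit := circlePoint_eq_iff
  disjoint := exists_nhds_glide_disjoint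

theorem nonempty_fundamentalGroup_axisCompl_mulEquiv [ContinuousConstSMul ℝ V] [ContinuousAdd E]
    [ContinuousSMul ℝ E] (x₀ : AxisCompl Φ) :
    Nonempty (FundamentalGroup (AxisCompl Φ) x₀ ≃* Multiplicative ℤ) := by
  have covering := isAddQuotientCoveringMap_circlePoint Φ
  obtain ⟨e, he⟩ := covering.surjective x₀
  exact ⟨(covering.fundamentalGroupEquiv ⟨e, he⟩).trans MulOpposite.opMulEquiv.symm⟩

end Complement

theorem exists_axis_eq {V : Type*} [AddCommGroup V] [Module ℝ V] [TopologicalSpace V]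
    [IsTopologicalAddGroup V] [ContinuousSMul ℝ V] {W : Submodule ℝ V}
    (hW : IsClosed (W : Set V)) (hcodim : Module.finrank ℝ (V ⧸ W) = 2) :
    ∃ Φ : V ≃L[ℝ] ℂ × W, axis Φ = W := by
  have : FiniteDimensional ℝ (V ⧸ W) := .of_finrank_pos (by omega)
  let e : (V ⧸ W) ≃L[ℝ] ℂ := .ofFinrankEq (hcodim.trans Complex.finrank_real_complex.symm)
  obtain ⟨φ, range_φ, rfl⟩ : ∃ φ : V →L[ℝ] ℂ, φ.range = ⊤ ∧ φ.ker = W := by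
    refine ⟨e ∘L W.mkQL, ?_, ?_⟩
    · exact LinearMap.range_eq_top.mpr (e.surjective.comp W.mkQ_surjective)
    · ext v
      simp
  obtain ⟨s, hs⟩ := φ.exists_rightInverse_of_surjective range_φ
  exact ⟨.equivOfRightInverse φ s (DFunLike.congr_fun hs), rfl⟩

theorem fundamentalGroup_complement_projective_line_general {V : Type*} [AddCommGroup V]
    [Module ℝ V] [TopologicalSpace V] [IsTopologicalAddGroup V] [ContinuousSMul ℝ V]
    (W : Submodule ℝ V) (hW : IsClosed (W : Set V)) (hcodim : Module.finrank ℝ (V ⧸ W) = 2)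
    (x₀ : {z : ℙ ℝ V // z ∉ W.projectivization}) :
    Nonempty (FundamentalGroup {z : ℙ ℝ V // z ∉ W.projectivization} x₀ ≃*
      Multiplicative ℤ) := by
  obtain ⟨Φ, hΦ⟩ := exists_axis_eq hW hcodim
  revert x₀
  rw [← hΦ]
  exact nonempty_fundamentalGroup_axisCompl_mulEquiv Φ

/-- Theorem 2 of the paper, "only if" direction for the standard line: the fundamental
group of the complement of a projective line in `ℝP³` is infinite cyclic. -/
theorem fundamentalGroup_complement_projective_line
    (W : Submodule ℝ (EuclideanSpace ℝ (Fin 4))) (hW : Module.finrank ℝ W = 2)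
    (ℓ : Set (Projectivization ℝ (EuclideanSpace ℝ (Fin 4))))
    (hℓ : ℓ = {z | ∃ (v : EuclideanSpace ℝ (Fin 4)) (hv : v ≠ 0),
      v ∈ W ∧ Projectivization.mk ℝ v hv = z})
    (x₀ : {z : Projectivization ℝ (EuclideanSpace ℝ (Fin 4)) // z ∉ ℓ}) :
    Nonempty (FundamentalGroup {z : Projectivization ℝ (EuclideanSpace ℝ (Fin 4)) // z ∉ ℓ} x₀
      ≃* Multiplicative ℤ) := by
  obtain rfl : ℓ = W.projectivization := by
    rw [hℓ]
    ext z
    constructor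
    · rintro ⟨v, hv, hvW, rfl⟩
      exact hvW
    · induction z with | h v hv => exact fun hvW => ⟨v, hv, hvW, rfl⟩
  have finrank_quotient : Module.finrank ℝ (EuclideanSpace ℝ (Fin 4) ⧸ W) = 2 := by
    rw [W.finrank_quotient, finrank_euclideanSpace_fin, hW]
  exact fundamentalGroup_complement_projective_line_general W W.closed_of_finiteDimensional
    finrank_quotient x₀
end

section
/- Let W₁ and W₂ be 2-dimensional linear subspaces of EuclideanSpace ℝ (Fin 4) with W₁ ⊓ W₂ = {0} (equivalently, complementary subspaces), and let ℓ₁ and ℓ₂ be the corresponding projective lines in ℝP³ (the images under Projectivization.mk of the nonzero vectors of W₁ and of W₂). Then ℓ₁ and ℓ₂ are disjoint, and for any basepoint x₀ in ℝP³ \ (ℓ₁ ∪ ℓ₂), the fundamental group π₁(ℝP³ \ (ℓ₁ ∪ ℓ₂), x₀) is isomorphic to the free abelian group ℤ × ℤ. -/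
/-!
Real-linear coordinates `V ≃ ℂ × ℂ` put the two lines at `w = 0` and `z = 0`, so that their
complement consists of the points `[z : w]` with `z, w ≠ 0`. Up to a positive real scalar such a
pair is `(e^{iθ}, e^{iθ + u})`, and `(θ, u) ↦ [e^{iθ} : e^{iθ + u}]` exhibits the complement as the
quotient of the simply connected group `ℝ × ℂ` by the discrete subgroup `πℤ × 2πiℤ`.
-/

open Complex Topology Module
open scoped LinearAlgebra.Projectivization

section Covering

theorem isDiscrete_prod {X Y : Type*} [TopologicalSpace X] [TopologicalSpace Y]
    {s : Set X} {t : Set Y} (hs : IsDiscrete s) (ht : IsDiscrete t) : IsDiscrete (s ×ˢ t) :=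
  have := hs.to_subtype
  have := ht.to_subtype
  ⟨(Homeomorph.Set.prod s t).symm.discreteTopology⟩

theorem nonempty_fundamentalGroup_mulEquiv_of_isQuotientMap {E X Γ : Type*} [AddGroup E]
    [TopologicalSpace E] [IsTopologicalAddGroup E] [SimplyConnectedSpace E] [TopologicalSpace X]
    [AddGroup Γ] {p : E → X} (hp : IsQuotientMap p) {ρ : Γ →+ E} (hρ : Function.Injective ρ)
    (hρd : IsDiscrete (ρ.range : Set E)) (hpρ : ∀ x y, p x = p y ↔ y - x ∈ ρ.range) (x₀ : X) :
    Nonempty (FundamentalGroup X x₀ ≃* Multiplicative Γ) := by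
  have hcov := hp.isAddQuotientCoveringMap_of_addSubgroup ρ.range hρd
    fun {x y} => by rw [hpρ, sub_eq_add_neg]
  obtain ⟨x, hx⟩ := hp.surjective x₀
  let deck : FundamentalGroup X x₀ ≃* (Multiplicative ρ.range)ᵐᵒᵖ :=
    hcov.fundamentalGroupEquiv (⟨x, hx⟩ : p ⁻¹' {x₀})
  let lattice : Multiplicative Γ ≃* Multiplicative ρ.range :=
    (AddMonoidHom.ofInjective hρ).toMultiplicative
  exact ⟨deck.trans ((MulEquiv.inv' _).symm.trans lattice.symm)⟩

end Covering

section Projectivization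

variable {K V : Type*} [DivisionRing K] [AddCommGroup V] [Module K V]

theorem coe_projectivization_eq_setOf (W : Submodule K V) :
    (W.projectivization : Set (ℙ K V)) =
      {z | ∃ (v : V) (hv : v ≠ 0), v ∈ W ∧ Projectivization.mk K v hv = z} := by
  ext z
  constructor
  · induction z using Projectivization.ind with
    | h v hv => exact fun hz => ⟨v, hv, hz, rfl⟩
  · rintro ⟨v, hv, hvW, rfl⟩
    exact hvW

theorem projectivization_inter_eq_empty {W₁ W₂ : Submodule K V} (hW : Disjoint W₁ W₂) :
    (W₁.projectivization ∩ W₂.projectivization : Set (ℙ K V)) = ∅ := by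
  refine Set.eq_empty_of_forall_notMem fun z => ?_
  induction z using Projectivization.ind with
  | h v hv => exact fun ⟨hv₁, hv₂⟩ => hv (Submodule.disjoint_def.1 hW v hv₁ hv₂)

theorem preimage_image_projectivization_mk' (U : Set {v : V // v ≠ 0}) :
    Projectivization.mk' K ⁻¹' (Projectivization.mk' K '' U) =
      ⋃ t : Kˣ, {v | ⟨t • v.1, (smul_ne_zero_iff_ne t).2 v.2⟩ ∈ U} := by
  ext v
  simp only [Set.mem_preimage, Set.mem_image, Set.mem_iUnion, Set.mem_ofPred_eq,
    Projectivization.mk'_eq_mk, Projectivization.mk_eq_mk_iff]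
  constructor
  · rintro ⟨w, hw, t, ht⟩
    exact ⟨t, by simpa only [ht] using hw⟩
  · rintro ⟨t, ht⟩
    exact ⟨_, ht, t, rfl⟩

variable [TopologicalSpace V]

theorem continuous_projectivization_mk' : Continuous (Projectivization.mk' K (V := V)) :=
  continuous_quot_mk

theorem isOpenMap_projectivization_mk'_s3 [ContinuousConstSMul K V] :
    IsOpenMap (Projectivization.mk' K (V := V)) := by
  intro U hU
  change IsOpen (Projectivization.mk' K ⁻¹' (Projectivization.mk' K '' U))
  rw [preimage_image_projectivization_mk']
  exact isOpen_iUnion fun t =>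
    hU.preimage ((continuous_subtype_val.const_smul t).subtype_mk _)

end Projectivization

section DeckGroup

theorem exp_eq_one_iff_mem_zmultiples {z : ℂ} :
    exp z = 1 ↔ z ∈ AddSubgroup.zmultiples (2 * Real.pi * I) := by
  simp only [exp_eq_one_iff, AddSubgroup.mem_zmultiples_iff, zsmul_eq_mul, eq_comm]

theorem exp_ofReal_mul_I_mem_range_ofReal_iff {θ : ℝ} :
    (∃ t : ℝ, (t : ℂ) = exp (θ * I)) ↔ θ ∈ AddSubgroup.zmultiples Real.pi := by
  have him : (exp (θ * I)).im = 0 ↔ ∃ t : ℝ, (t : ℂ) = exp (θ * I) := by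
    rw [← conj_eq_iff_im, conj_eq_iff_real]
    simp only [eq_comm]
  simp only [← him, exp_ofReal_mul_I_im, Real.sin_eq_zero_iff, AddSubgroup.mem_zmultiples_iff,
    zsmul_eq_mul]

/-- The embedding of `ℤ × ℤ` onto the group `πℤ × 2πiℤ` of deck translations of the covering
`(θ, u) ↦ [e^{iθ} : e^{iθ + u}]`. -/
noncomputable def deckHom : ℤ × ℤ →+ ℝ × ℂ :=
  (zmultiplesHom ℝ Real.pi).prodMap (zmultiplesHom ℂ (2 * Real.pi * I))

theorem deckHom_injective : Function.Injective deckHom :=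
  (smul_left_injective ℤ Real.pi_ne_zero).prodMap (smul_left_injective ℤ two_pi_I_ne_zero)

theorem range_deckHom : deckHom.range =
    (AddSubgroup.zmultiples Real.pi).prod (AddSubgroup.zmultiples (2 * Real.pi * I)) :=
  AddMonoidHom.range_prodMap _ _

theorem isDiscrete_range_deckHom : IsDiscrete (deckHom.range : Set (ℝ × ℂ)) := by
  rw [range_deckHom, AddSubgroup.coe_prod]
  exact isDiscrete_prod ⟨NormedSpace.discreteTopology_zmultiples _⟩
    ⟨NormedSpace.discreteTopology_zmultiples _⟩

theorem exists_ofReal_mul_exp_eq_iff {x y : ℝ × ℂ} :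
    (∃ t : ℝ, t * exp (x.1 * I) = exp (y.1 * I) ∧
        t * exp (x.1 * I + x.2) = exp (y.1 * I + y.2)) ↔ y - x ∈ deckHom.range := by
  have hfst (t : ℝ) : t * exp (x.1 * I) = exp (y.1 * I) ↔ (t : ℂ) = exp ((y - x).1 * I) := by
    rw [Prod.fst_sub, ofReal_sub, sub_mul, exp_sub, eq_div_iff (exp_ne_zero _)]
  have hsnd : exp x.2 = exp y.2 ↔ exp (y - x).2 = 1 := by
    rw [Prod.snd_sub, exp_sub, div_eq_one_iff_eq (exp_ne_zero _), eq_comm]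
  have hpair (t : ℝ) : t * exp (x.1 * I) = exp (y.1 * I) ∧
      t * exp (x.1 * I + x.2) = exp (y.1 * I + y.2) ↔
      (t : ℂ) = exp ((y - x).1 * I) ∧ exp (y - x).2 = 1 := by
    rw [← hfst, ← hsnd]
    refine and_congr_right fun ht => ?_
    rw [exp_add, exp_add, ← mul_assoc, ht, mul_right_inj' (exp_ne_zero _)]
  simp only [hpair, exists_and_right, exp_ofReal_mul_I_mem_range_ofReal_iff,
    exp_eq_one_iff_mem_zmultiples, range_deckHom, AddSubgroup.mem_prod]

end DeckGroup

section UniversalCover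

variable {V : Type*} [AddCommGroup V] [Module ℝ V] [TopologicalSpace V] (e : V ≃L[ℝ] ℂ × ℂ)

theorem symm_exp_prod_ne_zero (x : ℂ × ℂ) : e.symm (exp x.1, exp x.2) ≠ 0 := by
  simp [Prod.ext_iff]

/-- The map `(a, b) ↦ [e^a : e^b]` onto the points of `ℙ ℝ V` whose two complex coordinates are
both nonzero. -/
noncomputable def projExp (x : ℂ × ℂ) : ℙ ℝ V :=
  Projectivization.mk ℝ (e.symm (exp x.1, exp x.2)) (symm_exp_prod_ne_zero e x)

/-- The universal covering `(θ, u) ↦ [e^{iθ} : e^{iθ + u}]` of the complement of the two coordinate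
lines, as a map to the whole of `ℙ ℝ V`. It is the slice of `projExp` on which the first
exponent is imaginary. -/
noncomputable def complementCover (x : ℝ × ℂ) : ℙ ℝ V :=
  projExp e (x.1 * I, x.1 * I + x.2)

theorem projExp_eq_mk_iff {x : ℂ × ℂ} {v : V} (hv : v ≠ 0) :
    projExp e x = Projectivization.mk ℝ v hv ↔
      ∃ t : ℝ, t * (e v).1 = exp x.1 ∧ t * (e v).2 = exp x.2 := by
  rw [projExp, Projectivization.mk_eq_mk_iff']
  simp only [e.eq_symm_apply, map_smul, Prod.ext_iff, Prod.smul_fst, Prod.smul_snd, real_smul]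

theorem projExp_eq_iff {x y : ℂ × ℂ} :
    projExp e x = projExp e y ↔
      ∃ t : ℝ, t * exp y.1 = exp x.1 ∧ t * exp y.2 = exp x.2 :=
  (projExp_eq_mk_iff e (symm_exp_prod_ne_zero e y)).trans (by rw [e.apply_symm_apply])

theorem complementCover_im_sub (x : ℂ × ℂ) :
    complementCover e (x.1.im, x.2 - x.1) = projExp e x := by
  refine (projExp_eq_iff e).2 ⟨Real.exp (-x.1.re), ?_⟩
  simp only [ofReal_exp, ← exp_add, ofReal_neg]
  have him : -(x.1.re : ℂ) + x.1 = x.1.im * I := by linear_combination -re_add_im x.1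
  exact ⟨congrArg exp him, congrArg exp (by linear_combination him)⟩

theorem mk_mem_range_complementCover_iff {v : V} (hv : v ≠ 0) :
    Projectivization.mk ℝ v hv ∈ Set.range (complementCover e) ↔ (e v).1 ≠ 0 ∧ (e v).2 ≠ 0 := by
  constructor
  · rintro ⟨x, hx⟩
    obtain ⟨t, h₁, h₂⟩ := (projExp_eq_mk_iff e hv).1 hx
    exact ⟨right_ne_zero_of_mul (h₁ ▸ exp_ne_zero _), right_ne_zero_of_mul (h₂ ▸ exp_ne_zero _)⟩
  · rintro ⟨h₁, h₂⟩
    refine ⟨_, (complementCover_im_sub e (log (e v).1, log (e v).2)).trans ?_⟩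
    exact (projExp_eq_mk_iff e hv).2 ⟨1, by simp [exp_log h₁, exp_log h₂]⟩

theorem complementCover_eq_iff {x y : ℝ × ℂ} :
    complementCover e x = complementCover e y ↔ y - x ∈ deckHom.range := by
  rw [← exists_ofReal_mul_exp_eq_iff, eq_comm]
  exact projExp_eq_iff e

theorem continuous_projExp : Continuous (projExp e) :=
  continuous_projectivization_mk'.comp <|
    Continuous.subtype_mk (e.symm.continuous.comp (by fun_prop)) (symm_exp_prod_ne_zero e)

theorem continuous_complementCover : Continuous (complementCover e) :=
  (continuous_projExp e).comp (by fun_prop)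

variable [ContinuousConstSMul ℝ V]

theorem isOpenMap_projExp : IsOpenMap (projExp e) :=
  isOpenMap_projectivization_mk'_s3.comp <|
    (e.symm.toHomeomorph.isOpenMap.comp (isOpenMap_exp.prodMap isOpenMap_exp)).subtype_mk
      (symm_exp_prod_ne_zero e)

theorem isOpenMap_complementCover : IsOpenMap (complementCover e) := by
  let slice : ℂ × ℂ → ℝ × ℂ := fun x => (x.1.im, x.2 - x.1)
  have hslice : Function.Surjective slice := fun x =>
    ⟨(x.1 * I, x.1 * I + x.2), by simp [slice]⟩
  have hcomp : complementCover e ∘ slice = projExp e := funext (complementCover_im_sub e)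
  exact IsOpenMap.of_comp (by fun_prop) hslice (hcomp ▸ isOpenMap_projExp e)

theorem isQuotientMap_codRestrict_complementCover {s : Set (ℙ ℝ V)}
    (hs : Set.range (complementCover e) = s) :
    IsQuotientMap (s.codRestrict (complementCover e) fun x => hs ▸ Set.mem_range_self x) := by
  refine ((isOpenMap_complementCover e).codRestrict _).isQuotientMap
    ((continuous_complementCover e).codRestrict _) ?_
  rintro ⟨z, hz⟩
  obtain ⟨x, rfl⟩ := hs ▸ hz
  exact ⟨x, rfl⟩

theorem nonempty_fundamentalGroup_range_complementCover_mulEquiv {s : Set (ℙ ℝ V)}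
    (hs : Set.range (complementCover e) = s) (x₀ : s) :
    Nonempty (FundamentalGroup s x₀ ≃* Multiplicative (ℤ × ℤ)) :=
  nonempty_fundamentalGroup_mulEquiv_of_isQuotientMap
    (isQuotientMap_codRestrict_complementCover e hs) deckHom_injective isDiscrete_range_deckHom
    (fun _ _ => Subtype.ext_iff.trans (complementCover_eq_iff e)) x₀

end UniversalCover

section SkewLines

variable {V : Type*} [AddCommGroup V] [Module ℝ V] [TopologicalSpace V] [IsTopologicalAddGroup V]
  [ContinuousSMul ℝ V] [T2Space V] {W₁ W₂ : Submodule ℝ V}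

theorem exists_continuousLinearEquiv_prod_complex (hW₁ : finrank ℝ W₁ = 2)
    (hW₂ : finrank ℝ W₂ = 2) (hW : IsCompl W₁ W₂) :
    ∃ e : V ≃L[ℝ] ℂ × ℂ, (∀ v, v ∈ W₁ ↔ (e v).2 = 0) ∧ ∀ v, v ∈ W₂ ↔ (e v).1 = 0 := by
  have : FiniteDimensional ℝ W₁ := finite_of_finrank_eq_succ hW₁
  have : FiniteDimensional ℝ W₂ := finite_of_finrank_eq_succ hW₂
  let split := (W₁.prodEquivOfIsCompl W₂ hW).symm
  have : FiniteDimensional ℝ V := Module.Finite.equiv split.symm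
  let a : W₁ ≃ₗ[ℝ] ℂ := .ofFinrankEq _ _ (hW₁.trans finrank_real_complex.symm)
  let b : W₂ ≃ₗ[ℝ] ℂ := .ofFinrankEq _ _ (hW₂.trans finrank_real_complex.symm)
  refine ⟨(split.trans (a.prodCongr b)).toContinuousLinearEquiv, fun v => ?_, fun v => ?_⟩
  · rw [← Submodule.prodEquivOfIsCompl_symm_apply_snd_eq_zero W₁ W₂ hW]
    exact b.map_eq_zero_iff.symm
  · rw [← Submodule.prodEquivOfIsCompl_symm_apply_fst_eq_zero W₁ W₂ hW]
    exact a.map_eq_zero_iff.symm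

theorem fundamentalGroup_complement_two_skew_lines_general (hW₁ : finrank ℝ W₁ = 2)
    (hW₂ : finrank ℝ W₂ = 2) (hW : IsCompl W₁ W₂) :
    (W₁.projectivization ∩ W₂.projectivization : Set (ℙ ℝ V)) = ∅ ∧
    ∀ x₀ : {z : ℙ ℝ V // z ∉ (W₁.projectivization ∪ W₂.projectivization : Set (ℙ ℝ V))},
      Nonempty
        (FundamentalGroup
            {z : ℙ ℝ V // z ∉ (W₁.projectivization ∪ W₂.projectivization : Set (ℙ ℝ V))} x₀
          ≃* Multiplicative ℤ × Multiplicative ℤ) := by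
  refine ⟨projectivization_inter_eq_empty hW.disjoint, fun x₀ => ?_⟩
  obtain ⟨e, he₁, he₂⟩ := exists_continuousLinearEquiv_prod_complex hW₁ hW₂ hW
  have hrange : Set.range (complementCover e) =
      (W₁.projectivization ∪ W₂.projectivization : Set (ℙ ℝ V))ᶜ := by
    ext z
    induction z using Projectivization.ind with
    | h v hv =>
      simp only [mk_mem_range_complementCover_iff, Set.mem_compl_iff, Set.mem_union,
        SetLike.mem_coe, Submodule.mk_mem_projectivization_iff, he₁, he₂, not_or, and_comm, ne_eq]
  obtain ⟨f⟩ := nonempty_fundamentalGroup_range_complementCover_mulEquiv e hrange x₀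
  exact ⟨f.trans (MulEquiv.prodMultiplicative ℤ ℤ)⟩

end SkewLines

/-- The link `1₁²` of two skew projective lines in `ℝP³`: the two lines are disjoint and
the fundamental group of their complement is free abelian of rank two. -/
theorem fundamentalGroup_complement_two_skew_lines
    (W₁ W₂ : Submodule ℝ (EuclideanSpace ℝ (Fin 4)))
    (hW₁ : Module.finrank ℝ W₁ = 2) (hW₂ : Module.finrank ℝ W₂ = 2)
    (hW : W₁ ⊓ W₂ = ⊥)
    (ℓ₁ ℓ₂ : Set (Projectivization ℝ (EuclideanSpace ℝ (Fin 4))))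
    (hℓ₁ : ℓ₁ = {z | ∃ (v : EuclideanSpace ℝ (Fin 4)) (hv : v ≠ 0),
      v ∈ W₁ ∧ Projectivization.mk ℝ v hv = z})
    (hℓ₂ : ℓ₂ = {z | ∃ (v : EuclideanSpace ℝ (Fin 4)) (hv : v ≠ 0),
      v ∈ W₂ ∧ Projectivization.mk ℝ v hv = z}) :
    ℓ₁ ∩ ℓ₂ = ∅ ∧
    ∀ x₀ : {z : Projectivization ℝ (EuclideanSpace ℝ (Fin 4)) // z ∉ ℓ₁ ∪ ℓ₂},
      Nonempty
        (FundamentalGroup {z : Projectivization ℝ (EuclideanSpace ℝ (Fin 4)) // z ∉ ℓ₁ ∪ ℓ₂} x₀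
          ≃* Multiplicative ℤ × Multiplicative ℤ) := by
  have hdim : finrank ℝ (EuclideanSpace ℝ (Fin 4)) ≤ finrank ℝ W₁ + finrank ℝ W₂ := by
    rw [finrank_euclideanSpace_fin, hW₁, hW₂]
  have hcompl : IsCompl W₁ W₂ :=
    (Submodule.isCompl_iff_disjoint W₁ W₂ hdim).2 (disjoint_iff.2 hW)
  rw [← coe_projectivization_eq_setOf] at hℓ₁ hℓ₂
  subst hℓ₁ hℓ₂
  exact fundamentalGroup_complement_two_skew_lines_general hW₁ hW₂ hcompl
end
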